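/- Let λ be a partition of n and k ≥ 1. Then, as formal power series in q_1,…,q_k: (Π_{i=1}^k (q_i;q_i)_n) · Σ_{T ∈ SYT(λ)} Σ_{S ∈ (ℕ^k)^n with σ_{des(T)}(S) = ε} q^S = Σ_{T ∈ SYT(λ)} Σ_{σ⃗ ∈ S_n^{k−1}} q_1^{comaj^1_T(σ⃗)} q_2^{comaj^2_T(σ⃗)} ⋯ q_k^{comaj^k_T(σ⃗)}. (The left-hand sum over pairs (T,S) equals the plethystic principal evaluation s_λ[1/((1−q_1)⋯(1−q_k))], i.e., the sum of q^P over semistandard tableaux of shape λ with entries in ℕ^k.) -/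

import Mathlib

open scoped Classical

namespace RomeroComaj

noncomputable section

/-- `Seq r` is `ℕ^r`, the type of sequences of natural numbers of length `r`. -/
abbrev Seq (r : ℕ) := Fin r → ℕ

/-- strict lexicographic order on `ℕ^r`. -/
def lexLt {r : ℕ} (a b : Seq r) : Prop :=
  ∃ i : Fin r, (∀ j : Fin r, j < i → a j = b j) ∧ a i < b i

/-- weak lexicographic order on `ℕ^r`. -/
def lexLe {r : ℕ} (a b : Seq r) : Prop :=
  lexLt a b ∨ a = b

/-- `RNbr R a b` : the (1-indexed) indices `a` and `b` are `R`-neighbors,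
i.e. (for `a < b`) all of `a, a+1, …, b-1` lie in `R`. -/
def RNbr (R : Finset ℕ) (a b : ℕ) : Prop :=
  ∀ t ∈ Finset.Ico (min a b) (max a b), t ∈ R

/-- the value `σ_i` of the one-line notation of `σ`, both position `i` and
the value being 1-indexed (junk value `0` outside `1 ≤ i ≤ n`). -/
def pget {n : ℕ} (σ : Equiv.Perm (Fin n)) (i : ℕ) : ℕ :=
  if h : i - 1 < n then (σ ⟨i - 1, h⟩).val + 1 else 0

/-- the sequence `s^i` of a list `S = (s^1, …, s^n)`, `i` being 1-indexed. -/
def sget {n r : ℕ} (S : Fin n → Seq r) (i : ℕ) : Seq r :=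
  if h : i - 1 < n then S ⟨i - 1, h⟩ else 0

/-- the condition for `i` to belong to `Des_{R,S}(σ)`:
`s^{σ_i} > s^{σ_{i+1}} − χ(σ_{i+1} < σ_i ∧ σ_{i+1} ≁_R σ_i) − χ(σ_{i+1} > σ_i ∧ σ_i ∼_R σ_{i+1})`. -/
def desCond {n r : ℕ} (R : Finset ℕ) (S : Fin n → Seq r) (σ : Equiv.Perm (Fin n)) (i : ℕ) :
    Prop :=
  if (pget σ (i+1) < pget σ i ∧ ¬ RNbr R (pget σ (i+1)) (pget σ i)) ∨
      (pget σ i < pget σ (i+1) ∧ RNbr R (pget σ i) (pget σ (i+1)))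
  then lexLe (sget S (pget σ (i+1))) (sget S (pget σ i))
  else lexLt (sget S (pget σ (i+1))) (sget S (pget σ i))

/-- `Des_{R,S}(σ) ⊆ {1, …, n−1}` (1-indexed positions). -/
def DesSet {n r : ℕ} (R : Finset ℕ) (S : Fin n → Seq r) (σ : Equiv.Perm (Fin n)) : Finset ℕ :=
  (Finset.Icc 1 (n-1)).filter (fun i => desCond R S σ i)

/-- `Comaj_{R,S}(σ) = ∑_{i ∈ Des_{R,S}(σ)} (n − i)`. -/
def Comaj {n r : ℕ} (R : Finset ℕ) (S : Fin n → Seq r) (σ : Equiv.Perm (Fin n)) : ℕ :=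
  ∑ i ∈ DesSet R S σ, (n - i)

/-- `s^i` is read before `s^j` in the reading order of `S` (with respect to `R`);
`i, j` are 1-indexed. -/
def readBefore {n r : ℕ} (R : Finset ℕ) (S : Fin n → Seq r) (i j : ℕ) : Prop :=
  lexLt (sget S i) (sget S j) ∨
    (sget S i = sget S j ∧ ((i < j ∧ ¬ RNbr R i j) ∨ (j < i ∧ RNbr R j i)))

/-- `IsReading R S σ` says that the reading permutation `σ_R(S)` equals `σ`,
i.e. `σ` lists `1, …, n` in the reading order of `S`. -/
def IsReading {n r : ℕ} (R : Finset ℕ) (S : Fin n → Seq r) (σ : Equiv.Perm (Fin n)) : Prop :=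
  ∀ i ∈ Finset.Icc 1 (n-1), readBefore R S (pget σ i) (pget σ (i+1))

/-- the operator `Z_{R,σ} : (ℕ^r)^n → (ℕ^{r+1})^n`, prepending to `s^v` the number of
descents of `σ` (w.r.t. `R, S`) at positions strictly before the position of `v` in `σ`. -/
def Zop {n r : ℕ} (R : Finset ℕ) (σ : Equiv.Perm (Fin n)) (S : Fin n → Seq r) :
    Fin n → Seq (r+1) :=
  fun v => Fin.cons ((DesSet R S σ ∩ Finset.Ico 1 ((σ.symm v).val + 1)).card) (S v)

/-- `Zvec R σs i = Z_{R,σ^i} ⋯ Z_{R,σ^1}(∅)` where `σ^{j+1} = σs j`. -/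
def Zvec {n : ℕ} (R : Finset ℕ) (σs : ℕ → Equiv.Perm (Fin n)) : (i : ℕ) → Fin n → Seq i
  | 0 => fun _ => (0 : Seq 0)
  | (i+1) => Zop R (σs i) (Zvec R σs i)

/-- extend a finite vector of permutations to `ℕ`, by the identity. -/
def extFun {n r : ℕ} (σv : Fin r → Equiv.Perm (Fin n)) : ℕ → Equiv.Perm (Fin n) :=
  fun j => if h : j < r then σv ⟨j, h⟩ else 1

/-- `comajI R k σv i = comaj^i_R(σ⃗)` for `1 ≤ i ≤ k`, where `σ⃗ = σv` has length `k−1`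
and `σ^k = ε`. -/
def comajI {n : ℕ} (R : Finset ℕ) (k : ℕ) (σv : Fin (k-1) → Equiv.Perm (Fin n)) (i : ℕ) : ℕ :=
  Comaj R (Zvec R (extFun σv) (i-1)) (extFun σv (i-1))

/-- the exponent of the monomial `q^S` for `S ∈ (ℕ^r)^n` : the (0-indexed) variable `i`
(that is, `q_{i+1}`) records the `(r−i)`-th (0-indexed: `r−1−i`-th) coordinates. -/
def expOf {n r : ℕ} (S : Fin n → Seq r) : Fin r →₀ ℕ :=
  Finsupp.equivFunOnFinite.symm (fun i => ∑ j : Fin n, S j (Fin.rev i))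

/-- the formal power series whose coefficient at a monomial `d` counts the elements
`a : α` satisfying `P a d`. -/
def countSeriesP {σty α : Type*} (P : α → (σty →₀ ℕ) → Prop) : MvPowerSeries σty ℤ :=
  fun d => (Nat.card {a : α // P a d} : ℤ)

/-- `∑_{S ∈ (ℕ^r)^n, P S} q^S`. -/
def countSeries {n r : ℕ} (P : (Fin n → Seq r) → Prop) : MvPowerSeries (Fin r) ℤ :=
  countSeriesP (fun S d => P S ∧ expOf S = d)

/-- the Pochhammer factor `(q_i; q_i)_n = ∏_{j=1}^n (1 − q_i^j)`. -/
def pochOne {r : ℕ} (n : ℕ) (i : Fin r) : MvPowerSeries (Fin r) ℤ :=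
  ∏ j ∈ Finset.Icc 1 n, (1 - (MvPowerSeries.X i : MvPowerSeries (Fin r) ℤ) ^ j)

/-- `∏_{i=1}^{r} (q_i; q_i)_n`. -/
def pochAll (n r : ℕ) : MvPowerSeries (Fin r) ℤ :=
  ∏ i : Fin r, pochOne n i

/-- the exponent of `q_1^{comaj¹_R(σ⃗)} ⋯ q_k^{comaj^k_R(σ⃗)}`. -/
def comajExp {n : ℕ} (R : Finset ℕ) (k : ℕ) (σv : Fin (k-1) → Equiv.Perm (Fin n)) :
    Fin k →₀ ℕ :=
  Finsupp.equivFunOnFinite.symm (fun i => comajI R k σv (i.val + 1))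

/-- A standard Young tableau of shape `μ` (with `μ.card` cells), recorded by the
position `pos i` of each (1-indexed) entry `i ∈ {1, …, μ.card}`; entries increase
left-to-right along rows and down columns (matrix convention), and `pos` is a
bijection from `{1, …, μ.card}` onto the cells of `μ` (normalized by `0` outside). -/
structure SYT (μ : YoungDiagram) where
  pos : ℕ → ℕ × ℕ
  mem : ∀ i ∈ Finset.Icc 1 μ.card, pos i ∈ μ
  inj : ∀ i ∈ Finset.Icc 1 μ.card, ∀ j ∈ Finset.Icc 1 μ.card, pos i = pos j → i = j
  surj : ∀ c ∈ μ, ∃ i ∈ Finset.Icc 1 μ.card, pos i = c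
  row_inc : ∀ i ∈ Finset.Icc 1 μ.card, ∀ j ∈ Finset.Icc 1 μ.card,
    (pos i).1 = (pos j).1 → (pos i).2 < (pos j).2 → i < j
  col_inc : ∀ i ∈ Finset.Icc 1 μ.card, ∀ j ∈ Finset.Icc 1 μ.card,
    (pos i).2 = (pos j).2 → (pos i).1 < (pos j).1 → i < j
  junk : ∀ i, i ∉ Finset.Icc 1 μ.card → pos i = 0

/-- `des(T)` : the set of `i ∈ {1, …, n−1}` such that `i+1` lies in a strictly
higher row of `T` than `i` (in matrix convention: a strictly larger row index). -/
def desSYT {μ : YoungDiagram} (T : SYT μ) : Finset ℕ :=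
  (Finset.Icc 1 (μ.card - 1)).filter (fun i => (T.pos i).1 < (T.pos (i+1)).1)

/-- the ordinary descent set `des(π) = {i : π_i > π_{i+1}}` (1-indexed). -/
def desPerm {n : ℕ} (π : Equiv.Perm (Fin n)) : Finset ℕ :=
  (Finset.Icc 1 (n-1)).filter (fun i => pget π (i+1) < pget π i)

/-- `comaj(π) = ∑_{i ∈ des(π)} (n − i)`. -/
def comajP {n : ℕ} (π : Equiv.Perm (Fin n)) : ℕ :=
  ∑ i ∈ desPerm π, (n - i)


theorem countSeriesP_congr {τ α β : Type*} {P : α → (τ →₀ ℕ) → Prop}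
    {Q : β → (τ →₀ ℕ) → Prop} (f : α ≃ β) (h : ∀ a d, P a d ↔ Q (f a) d) :
    countSeriesP P = countSeriesP Q := by
  funext d
  unfold countSeriesP
  exact congrArg _ (Nat.card_congr (f.subtypeEquiv (fun a => h a d)))

theorem fin_step {τ α : Type*} (w : α → (τ →₀ ℕ)) (hw : ∀ d, Finite {a // w a = d})
    (e : τ →₀ ℕ) (he : e ≠ 0) (d : τ →₀ ℕ) :
    Finite {p : α × ℕ // w p.1 + p.2 • e = d} := by
  obtain ⟨i, hi⟩ := Finsupp.ne_iff.1 he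
  have h1 : (⋃ d' ∈ Set.Iic d, {a | w a = d'}).Finite :=
    (Set.finite_Iic d).biUnion (fun d' _ => Set.finite_coe_iff.1 (hw d'))
  have key : {p : α × ℕ | w p.1 + p.2 • e = d}.Finite := by
    refine (h1.prod (Set.finite_Iic (d i))).subset ?_
    rintro ⟨a, m⟩ h
    replace h : w a + m • e = d := h
    refine ⟨?_, ?_⟩
    · simp only [Set.mem_iUnion, Set.mem_Iic, Set.mem_ofPred_eq, exists_prop, exists_eq_right']
      rw [← h]; exact le_self_add
    · simp only [Set.mem_Iic]
      have := DFunLike.congr_fun h i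
      simp at this hi
      nlinarith [Nat.pos_of_ne_zero hi, Nat.zero_le (w a i)]
  exact Set.finite_coe_iff.2 key

theorem one_step {τ α : Type*} (w : α → (τ →₀ ℕ)) (hw : ∀ d, Finite {a // w a = d})
    (e : τ →₀ ℕ) (he : e ≠ 0) :
    (1 - MvPowerSeries.monomial e (1 : ℤ)) *
      countSeriesP (fun (p : α × ℕ) d => w p.1 + p.2 • e = d) =
    countSeriesP (fun a d => w a = d) := by
  have hF := fin_step w hw e he
  ext d
  rw [sub_mul, one_mul, map_sub, MvPowerSeries.coeff_monomial_mul]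
  have c2 : MvPowerSeries.coeff d (countSeriesP (fun (a : α) d => w a = d)) =
      (Nat.card {a : α // w a = d} : ℤ) := rfl
  have c3 : ∀ d, MvPowerSeries.coeff d
      (countSeriesP (fun (p : α × ℕ) d => w p.1 + p.2 • e = d)) =
      (Nat.card {p : α × ℕ // w p.1 + p.2 • e = d} : ℤ) := fun d => rfl
  rw [c2, c3, c3]
  let E : {p : α × ℕ // w p.1 + p.2 • e = d} ≃
      {a : α // w a = d} ⊕ {p : α × ℕ // w p.1 + (p.2 + 1) • e = d} :=
    { toFun := fun p => match p with
        | ⟨(a, 0), h⟩ => Sum.inl ⟨a, by simpa using h⟩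
        | ⟨(a, m+1), h⟩ => Sum.inr ⟨(a, m), h⟩
      invFun := fun p => match p with
        | Sum.inl ⟨a, h⟩ => ⟨(a, 0), by simpa using h⟩
        | Sum.inr ⟨(a, m), h⟩ => ⟨(a, m+1), h⟩
      left_inv := by rintro ⟨⟨a, _ | m⟩, h⟩ <;> rfl
      right_inv := by rintro (⟨a, h⟩ | ⟨⟨a, m⟩, h⟩) <;> rfl }
  have hfin2 : Finite {p : α × ℕ // w p.1 + (p.2 + 1) • e = d} := by
    have := hF d
    exact Finite.of_injective (fun x => E.symm (Sum.inr x))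
      (E.symm.injective.comp Sum.inr_injective)
  have := hw d
  have hc : Nat.card {p : α × ℕ // w p.1 + p.2 • e = d} = Nat.card {a : α // w a = d} +
      Nat.card {p : α × ℕ // w p.1 + (p.2 + 1) • e = d} := by
    rw [Nat.card_congr E, Nat.card_sum]
  rw [hc]
  split_ifs with hed
  · have : Nat.card {p : α × ℕ // w p.1 + (p.2 + 1) • e = d} =
        Nat.card {p : α × ℕ // w p.1 + p.2 • e = d - e} := by
      apply Nat.card_congr
      apply Equiv.subtypeEquivRight
      intro p
      rw [succ_nsmul, ← add_assoc]
      constructor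
      · intro h; rw [← h, add_tsub_cancel_right]
      · intro h; rw [h, tsub_add_cancel_of_le hed]
    rw [this]; push_cast; ring
  · have : IsEmpty {p : α × ℕ // w p.1 + (p.2 + 1) • e = d} := by
      refine ⟨fun p => hed ?_⟩
      rw [← p.2, succ_nsmul, ← add_assoc]
      exact le_add_self
    rw [Nat.card_of_isEmpty (α := {p : α × ℕ // w p.1 + (p.2 + 1) • e = d})]; simp

theorem many_step {τ : Type*} (N : ℕ) : ∀ {α : Type} (w : α → (τ →₀ ℕ))
    (_ : ∀ d, Finite {a // w a = d}) (e : Fin N → (τ →₀ ℕ)) (_ : ∀ i, e i ≠ 0),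
    (∏ i, (1 - MvPowerSeries.monomial (e i) (1 : ℤ))) *
      countSeriesP (fun (p : α × (Fin N → ℕ)) d => w p.1 + ∑ i, p.2 i • e i = d) =
    countSeriesP (fun a d => w a = d) := by
  induction N with
  | zero =>
    intro α w hw e he
    simp only [Finset.univ_eq_empty, Finset.prod_empty, one_mul, Finset.sum_empty, add_zero]
    exact countSeriesP_congr (Equiv.prodUnique α (Fin 0 → ℕ)) (fun a d => Iff.rfl)
  | succ N ih =>
    intro α w hw e he
    have h := ih (α := α × ℕ) (fun p => w p.1 + p.2 • e 0) (fin_step w hw _ (he 0))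
      (fun i => e i.succ) (fun i => he _)
    rw [Fin.prod_univ_succ, mul_assoc, ← one_step w hw _ (he 0), ← h]
    congr 2
    refine countSeriesP_congr
      { toFun := fun p => ((p.1, p.2 0), fun i => p.2 i.succ)
        invFun := fun p => (p.1.1, Fin.cons p.1.2 p.2)
        left_inv := ?_
        right_inv := ?_ } ?_
    · rintro ⟨a, f⟩
      simp only [Prod.mk.injEq, true_and]
      exact Fin.cons_self_tail f
    · rintro ⟨⟨a, m⟩, f⟩; simp
    · intro p d
      simp [Fin.sum_univ_succ, add_assoc]

theorem many_step' {τ ι : Type*} [Fintype ι] {α : Type} (w : α → (τ →₀ ℕ))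
    (hw : ∀ d, Finite {a // w a = d}) (e : ι → (τ →₀ ℕ)) (he : ∀ i, e i ≠ 0) :
    (∏ i, (1 - MvPowerSeries.monomial (e i) (1 : ℤ))) *
      countSeriesP (fun (p : α × (ι → ℕ)) d => w p.1 + ∑ i, p.2 i • e i = d) =
    countSeriesP (fun a d => w a = d) := by
  let f := Fintype.equivFin ι
  rw [← many_step _ w hw (fun i => e (f.symm i)) (fun i => he _)]
  rw [← Equiv.prod_comp f.symm]
  congr 1
  refine countSeriesP_congr (Equiv.prodCongr (Equiv.refl _) (Equiv.arrowCongr f (Equiv.refl _))) ?_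
  intro p d
  rw [← Equiv.sum_comp f.symm]
  simp [Equiv.arrowCongr]

theorem pochAll_eq (n k : ℕ) : pochAll n k =
    ∏ p : Fin k × Fin n, (1 - MvPowerSeries.monomial
      (Finsupp.single p.1 (n - p.2.val)) (1 : ℤ)) := by
  rw [Fintype.prod_prod_type]
  unfold pochAll pochOne
  refine Finset.prod_congr rfl (fun i _ => ?_)
  simp only [MvPowerSeries.X_pow_eq]
  rw [Fin.prod_univ_eq_prod_range
    (fun j => 1 - MvPowerSeries.monomial (Finsupp.single i (n - j)) (1 : ℤ)) n]
  refine Finset.prod_bij' (fun j _ => n - j) (fun j _ => n - j) ?_ ?_ ?_ ?_ ?_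
  all_goals simp only [Finset.mem_Icc, Finset.mem_range]
  all_goals intro j hj
  · omega
  · omega
  · omega
  · omega
  · rw [Nat.sub_sub_self hj.2]

theorem pget_succ {n : ℕ} (σ : Equiv.Perm (Fin n)) (p : ℕ) (h : p < n) :
    pget σ (p + 1) = (σ ⟨p, h⟩).val + 1 := by
  simp [pget, h]

theorem sget_succ {n r : ℕ} (S : Fin n → Seq r) (a : Fin n) : sget S (a.val + 1) = S a := by
  simp [sget]

/-- tie-breaking order -/
def Tie (R : Finset ℕ) (i j : ℕ) : Prop := (i < j ∧ ¬ RNbr R i j) ∨ (j < i ∧ RNbr R j i)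

theorem RNbr_lt {R : Finset ℕ} {i j : ℕ} (h : i < j) :
    RNbr R i j ↔ ∀ t, i ≤ t → t < j → t ∈ R := by
  unfold RNbr
  rw [min_eq_left h.le, max_eq_right h.le]
  simp

theorem Tie_trans {R : Finset ℕ} {i j k : ℕ} (h1 : Tie R i j) (h2 : Tie R j k) : Tie R i k := by
  unfold Tie at *
  rcases h1 with ⟨h, h1⟩ | ⟨h, h1⟩ <;> rcases h2 with ⟨h', h2⟩ | ⟨h', h2⟩ <;>
    rw [RNbr_lt h] at h1 <;> rw [RNbr_lt h'] at h2
  · left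
    refine ⟨by omega, ?_⟩
    rw [RNbr_lt (by omega)]
    intro h3; exact h1 (fun t a b => h3 t a (by omega))
  · rcases lt_trichotomy i k with h3 | h3 | h3
    · left
      refine ⟨h3, ?_⟩
      rw [RNbr_lt h3]
      intro h4; apply h1; intro t a b
      by_cases hc : t < k
      · exact h4 t a hc
      · exact h2 t (by omega) b
    · subst h3; exact absurd h2 h1
    · exfalso; exact h1 (fun t a b => h2 t (by omega) b)
  · rcases lt_trichotomy i k with h3 | h3 | h3
    · left
      refine ⟨h3, ?_⟩
      rw [RNbr_lt h3]
      intro h4; apply h2; intro t a b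
      by_cases hc : t < i
      · exact h1 t a hc
      · exact h4 t (by omega) b
    · subst h3; exact absurd h1 h2
    · exfalso; exact h2 (fun t a b => h1 t a (by omega))
  · right
    refine ⟨by omega, ?_⟩
    rw [RNbr_lt (by omega)]
    intro t a b
    by_cases hc : t < j
    · exact h2 t a hc
    · exact h1 t (by omega) b

theorem Tie_irrefl {R : Finset ℕ} {i : ℕ} : ¬ Tie R i i := by
  unfold Tie; simp

theorem Tie_total {R : Finset ℕ} {i j : ℕ} (h : i ≠ j) : Tie R i j ∨ Tie R j i := by
  unfold Tie
  rcases lt_or_gt_of_ne h with h | h <;> by_cases h' : RNbr R i j <;>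
    by_cases h'' : RNbr R j i <;> simp_all

theorem lexLt_iff {r : ℕ} (a b : Seq r) : lexLt a b ↔ toLex a < toLex b := Iff.rfl

/-- reading order on `Fin n` -/
def RB {n r : ℕ} (R : Finset ℕ) (S : Fin n → Seq r) (a b : Fin n) : Prop :=
  toLex (S a) < toLex (S b) ∨ (S a = S b ∧ Tie R (a.val + 1) (b.val + 1))

theorem RB_iff {n r : ℕ} (R : Finset ℕ) (S : Fin n → Seq r) (a b : Fin n) :
    readBefore R S (a.val + 1) (b.val + 1) ↔ RB R S a b := by
  unfold readBefore RB Tie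
  rw [sget_succ, sget_succ, lexLt_iff]

theorem RB_trans {n r : ℕ} {R : Finset ℕ} {S : Fin n → Seq r} {a b c : Fin n}
    (h1 : RB R S a b) (h2 : RB R S b c) : RB R S a c := by
  unfold RB at *
  rcases h1 with h1 | ⟨h1, t1⟩ <;> rcases h2 with h2 | ⟨h2, t2⟩
  · exact Or.inl (h1.trans h2)
  · rw [h2] at h1; exact Or.inl h1
  · rw [← h1] at h2; exact Or.inl h2
  · exact Or.inr ⟨h1.trans h2, Tie_trans t1 t2⟩

theorem RB_irrefl {n r : ℕ} {R : Finset ℕ} {S : Fin n → Seq r} {a : Fin n} : ¬ RB R S a a := by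
  unfold RB
  rintro (h | ⟨_, h⟩)
  · exact lt_irrefl _ h
  · exact Tie_irrefl h

theorem RB_total {n r : ℕ} {R : Finset ℕ} {S : Fin n → Seq r} {a b : Fin n} (h : a ≠ b) :
    RB R S a b ∨ RB R S b a := by
  unfold RB
  rcases lt_trichotomy (toLex (S a)) (toLex (S b)) with h1 | h1 | h1
  · exact Or.inl (Or.inl h1)
  · have h2 : S a = S b := toLex_inj.1 h1
    have : a.val + 1 ≠ b.val + 1 := by
      intro h3; exact h (Fin.ext (by omega))
    rcases Tie_total (R := R) this with t | t
    · exact Or.inl (Or.inr ⟨h2, t⟩)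
    · exact Or.inr (Or.inr ⟨h2.symm, t⟩)
  · exact Or.inr (Or.inl h1)

theorem RB_asymm {n r : ℕ} {R : Finset ℕ} {S : Fin n → Seq r} {a b : Fin n}
    (h : RB R S a b) : ¬ RB R S b a := fun h' => RB_irrefl (RB_trans h h')

theorem isReading_iff {n r : ℕ} (R : Finset ℕ) (S : Fin n → Seq r) (σ : Equiv.Perm (Fin n)) :
    IsReading R S σ ↔ ∀ p (h : p + 1 < n), RB R S (σ ⟨p, by omega⟩) (σ ⟨p + 1, h⟩) := by
  unfold IsReading
  constructor
  · intro H p h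
    have := H (p + 1) (by simp; omega)
    rwa [pget_succ σ p (by omega), pget_succ σ (p + 1) h, RB_iff] at this
  · intro H i hi
    simp only [Finset.mem_Icc] at hi
    obtain ⟨p, rfl⟩ : ∃ p, i = p + 1 := ⟨i - 1, by omega⟩
    rw [pget_succ σ p (by omega), pget_succ σ (p + 1) (by omega), RB_iff]
    exact H p _

theorem mem_DesSet {n r : ℕ} (R : Finset ℕ) (S : Fin n → Seq r) (σ : Equiv.Perm (Fin n)) (p : ℕ)
    (h : p + 1 < n) :
    p + 1 ∈ DesSet R S σ ↔ RB R S (σ ⟨p + 1, h⟩) (σ ⟨p, by omega⟩) := by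
  unfold DesSet
  rw [Finset.mem_filter, ← RB_iff, ← pget_succ σ p (by omega), ← pget_succ σ (p + 1) h]
  simp only [Finset.mem_Icc]
  have : 1 ≤ p + 1 ∧ p + 1 ≤ n - 1 := by omega
  simp only [this, and_self, true_and]
  unfold desCond readBefore lexLe
  split_ifs with hc
  · simp only [hc, and_true, eq_comm]
  · simp only [hc, and_false, or_false]

theorem DesSet_range {n r : ℕ} {R : Finset ℕ} {S : Fin n → Seq r} {σ : Equiv.Perm (Fin n)} {i : ℕ}
    (h : i ∈ DesSet R S σ) : 1 ≤ i ∧ i < n := by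
  unfold DesSet at h
  simp only [Finset.mem_filter, Finset.mem_Icc] at h
  omega

theorem reading_lt {n r : ℕ} {R : Finset ℕ} {S : Fin n → Seq r} {σ : Equiv.Perm (Fin n)}
    (h : IsReading R S σ) {a b : Fin n} (hab : a < b) : RB R S (σ a) (σ b) := by
  rw [isReading_iff] at h
  obtain ⟨a, ha⟩ := a
  obtain ⟨b, hb⟩ := b
  replace hab : a < b := hab
  obtain ⟨m, rfl⟩ : ∃ m, b = a + m + 1 := ⟨b - a - 1, by omega⟩
  clear hab
  induction m with
  | zero => exact h a hb
  | succ m ih => exact RB_trans (ih (by omega)) (h (a + m + 1) hb)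

theorem reading_iff {n r : ℕ} {R : Finset ℕ} {S : Fin n → Seq r} {σ : Equiv.Perm (Fin n)}
    (h : IsReading R S σ) (a b : Fin n) : RB R S a b ↔ σ.symm a < σ.symm b := by
  constructor
  · intro hr
    rcases lt_trichotomy (σ.symm a) (σ.symm b) with h1 | h1 | h1
    · exact h1
    · have := σ.symm.injective h1
      subst this; exact absurd hr RB_irrefl
    · have := reading_lt h h1
      simp only [Equiv.apply_symm_apply] at this
      exact absurd hr (RB_asymm this)
  · intro h1
    simpa using reading_lt h h1

theorem reading_unique {n r : ℕ} {R : Finset ℕ} {S : Fin n → Seq r} {σ τ : Equiv.Perm (Fin n)}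
    (h : IsReading R S σ) (h' : IsReading R S τ) : σ = τ := by
  have hm : ∀ a b, (σ.symm (τ a)) < (σ.symm (τ b)) ↔ a < b := by
    intro a b
    rw [← reading_iff h, reading_iff h']; simp
  let f : Fin n ≃o Fin n := (StrictMono.orderIsoOfSurjective (fun a => σ.symm (τ a))
    (fun a b hab => (hm a b).2 hab) (σ.symm.surjective.comp τ.surjective))
  have hf : f = OrderIso.refl _ := Subsingleton.elim _ _
  ext a
  have : σ.symm (τ a) = a := DFunLike.congr_fun hf a
  rw [Equiv.symm_apply_eq] at this
  rw [this]

theorem reading_exists {n r : ℕ} (R : Finset ℕ) (S : Fin n → Seq r) :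
    ∃ σ, IsReading R S σ := by
  let rk : Fin n → Finset (Fin n) := fun v => Finset.univ.filter (fun u => RB R S u v)
  have hlt : ∀ a b, RB R S a b → (rk a).card < (rk b).card := by
    intro a b h
    apply Finset.card_lt_card
    rw [Finset.ssubset_iff_of_subset]
    · exact ⟨a, by simpa [rk] using h, by simpa [rk] using RB_irrefl⟩
    · intro c hc
      simp only [rk, Finset.mem_filter, Finset.mem_univ, true_and] at hc ⊢
      exact RB_trans hc h
  have hb : ∀ v, (rk v).card < n := by
    intro v
    have : (rk v).card < (Finset.univ : Finset (Fin n)).card := by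
      apply Finset.card_lt_card
      rw [Finset.ssubset_iff_of_subset (Finset.subset_univ _)]
      exact ⟨v, Finset.mem_univ _, by simpa [rk] using RB_irrefl⟩
    simpa using this
  let f : Fin n → Fin n := fun v => ⟨(rk v).card, hb v⟩
  have hf : Function.Injective f := by
    intro a b hab
    by_contra hne
    have hab : (rk a).card = (rk b).card := congrArg Fin.val hab
    rcases RB_total (R := R) (S := S) hne with h | h <;> have := hlt _ _ h <;> omega
  let e : Equiv.Perm (Fin n) := Equiv.ofBijective f (Finite.injective_iff_bijective.1 hf)
  refine ⟨e.symm, ?_⟩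
  rw [isReading_iff]
  intro p h
  have hne : e.symm ⟨p, by omega⟩ ≠ e.symm ⟨p + 1, h⟩ := by
    intro h1
    have := congrArg Fin.val (e.symm.injective h1)
    simp at this
  rcases RB_total (R := R) (S := S) hne with h1 | h1
  · exact h1
  · have h2 := hlt _ _ h1
    have h3 : ∀ x, (rk (e.symm x)).card = x.val := by
      intro x
      have : e (e.symm x) = x := by simp
      exact congrArg Fin.val this
    rw [h3, h3] at h2
    simp at h2

theorem DesSet_congr {n r r' : ℕ} {R : Finset ℕ} {S : Fin n → Seq r} {S' : Fin n → Seq r'}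
    {τ : Equiv.Perm (Fin n)} (h : IsReading R S τ) (h' : IsReading R S' τ)
    (σ : Equiv.Perm (Fin n)) : DesSet R S σ = DesSet R S' σ := by
  ext i
  by_cases hi : 1 ≤ i ∧ i < n
  · obtain ⟨p, rfl⟩ : ∃ p, i = p + 1 := ⟨i - 1, by omega⟩
    rw [mem_DesSet _ _ _ _ hi.2, mem_DesSet _ _ _ _ hi.2, reading_iff h, reading_iff h']
  · exact ⟨fun h => absurd (DesSet_range h) hi, fun h => absurd (DesSet_range h) hi⟩

theorem RB_cons {n r : ℕ} (R : Finset ℕ) (x : Fin n → ℕ) (S : Fin n → Seq r) (a b : Fin n) :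
    RB R (fun v => (Fin.cons (x v) (S v) : Seq (r + 1))) a b ↔
      x a < x b ∨ (x a = x b ∧ RB R S a b) := by
  unfold RB
  have h1 : (Fin.cons (x a) (S a) : Seq (r + 1)) = Fin.cons (x b) (S b) ↔
      x a = x b ∧ S a = S b := by
    constructor
    · intro h; exact Fin.cons_inj.1 h
    · rintro ⟨h, h'⟩; rw [h, h']
  have h2 : toLex (Fin.cons (x a) (S a) : Seq (r + 1)) < toLex (Fin.cons (x b) (S b) : Seq (r + 1))
      ↔ x a < x b ∨ (x a = x b ∧ toLex (S a) < toLex (S b)) := by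
    rw [← lexLt_iff, ← lexLt_iff]
    unfold lexLt
    constructor
    · rintro ⟨i, hi, hlt⟩
      induction i using Fin.cases with
      | zero => left; simpa using hlt
      | succ i =>
        right
        refine ⟨by simpa using hi 0 (Fin.succ_pos i), i, fun j hj => ?_, by simpa using hlt⟩
        simpa using hi j.succ (Fin.succ_lt_succ_iff.2 hj)
    · rintro (h | ⟨h, i, hi, hlt⟩)
      · exact ⟨0, fun j hj => absurd hj (Fin.not_lt_zero j), by simpa using h⟩
      · refine ⟨i.succ, fun j hj => ?_, by simpa using hlt⟩
        induction j using Fin.cases with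
        | zero => simpa using h
        | succ j => simpa using hi j (Fin.succ_lt_succ_iff.1 hj)
  rw [h1, h2]
  tauto

theorem isReading_cons {n r : ℕ} (R : Finset ℕ) (x : Fin n → ℕ) (S : Fin n → Seq r)
    (σ : Equiv.Perm (Fin n)) :
    IsReading R (fun v => (Fin.cons (x v) (S v) : Seq (r + 1))) σ ↔
      ∀ p (h : p + 1 < n), x (σ ⟨p, by omega⟩) + (if p + 1 ∈ DesSet R S σ then 1 else 0) ≤
        x (σ ⟨p + 1, h⟩) := by
  rw [isReading_iff]
  refine forall_congr' fun p => forall_congr' fun h => ?_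
  rw [RB_cons]
  have hm := mem_DesSet R S σ p h
  split_ifs with hd <;> rw [hm] at hd
  · have := RB_asymm hd
    simp only [this, and_false, or_false]
    omega
  · have hne : σ ⟨p + 1, h⟩ ≠ σ ⟨p, by omega⟩ := by
      intro h1
      have := congrArg Fin.val (σ.injective h1)
      simp at this
    have := (RB_total (R := R) (S := S) hne).resolve_left hd
    simp only [this, and_true]
    omega

/-- prepended coordinate with descents `Des` and increments `c` -/
def xval {n r : ℕ} (R : Finset ℕ) (S : Fin n → Seq r) (σ : Equiv.Perm (Fin n)) (c : ℕ → ℕ)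
    (v : Fin n) : ℕ :=
  (DesSet R S σ ∩ Finset.Ico 1 ((σ.symm v).val + 1)).card +
    ∑ j ∈ Finset.range ((σ.symm v).val + 1), c j

theorem card_step (D : Finset ℕ) (p : ℕ) :
    (D ∩ Finset.Ico 1 (p + 1 + 1)).card =
      (D ∩ Finset.Ico 1 (p + 1)).card + (if p + 1 ∈ D then 1 else 0) := by
  have h : Finset.Ico 1 (p + 1 + 1) = insert (p + 1) (Finset.Ico 1 (p + 1)) := by
    ext; simp only [Finset.mem_Ico, Finset.mem_insert]; omega
  rw [h]
  split_ifs with hd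
  · rw [Finset.inter_insert_of_mem hd, Finset.card_insert_of_notMem (by simp)]
  · rw [Finset.inter_insert_of_notMem hd, add_zero]

theorem xval_reading {n r : ℕ} (R : Finset ℕ) (S : Fin n → Seq r) (σ : Equiv.Perm (Fin n))
    (c : ℕ → ℕ) :
    IsReading R (fun v => (Fin.cons (xval R S σ c v) (S v) : Seq (r + 1))) σ := by
  rw [isReading_cons]
  intro p h
  unfold xval
  simp only [Equiv.symm_apply_apply]
  rw [card_step, Finset.sum_range_succ _ (p + 1)]
  omega

theorem xval_surj {n r : ℕ} (R : Finset ℕ) (S : Fin n → Seq r) (σ : Equiv.Perm (Fin n))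
    (x : Fin n → ℕ) (h : IsReading R (fun v => (Fin.cons (x v) (S v) : Seq (r + 1))) σ) :
    ∃ c, xval R S σ c = x := by
  rw [isReading_cons] at h
  let y : ℕ → ℕ := fun p => if h : p < n then x (σ ⟨p, h⟩) else 0
  have hy : ∀ p (h : p < n), y p = x (σ ⟨p, h⟩) := fun p h => by simp [y, h]
  let c : ℕ → ℕ := fun j => if j = 0 then y 0 else
    y j - (y (j - 1) + (if j ∈ DesSet R S σ then 1 else 0))
  have key : ∀ p, p < n → (DesSet R S σ ∩ Finset.Ico 1 (p + 1)).card +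
      ∑ j ∈ Finset.range (p + 1), c j = y p := by
    intro p
    induction p with
    | zero => intro _; simp [c]
    | succ p ih =>
      intro hp
      have h1 := ih (by omega)
      have h2 := h p hp
      rw [← hy, ← hy] at h2
      rw [card_step, Finset.sum_range_succ _ (p + 1)]
      have h3 : c (p + 1) = y (p + 1) - (y p + (if p + 1 ∈ DesSet R S σ then 1 else 0)) := by
        simp [c]
      omega
  refine ⟨c, ?_⟩
  funext v
  unfold xval
  rw [key _ (σ.symm v).2, hy _ (σ.symm v).2]
  simp

theorem xval_inj {n r : ℕ} (R : Finset ℕ) (S : Fin n → Seq r) (σ : Equiv.Perm (Fin n))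
    (c c' : ℕ → ℕ) (h : xval R S σ c = xval R S σ c') : ∀ j, j < n → c j = c' j := by
  have h1 : ∀ p, p < n → ∑ j ∈ Finset.range (p + 1), c j = ∑ j ∈ Finset.range (p + 1), c' j := by
    intro p hp
    have := congrFun h (σ ⟨p, hp⟩)
    unfold xval at this
    simp only [Equiv.symm_apply_apply] at this
    omega
  intro j hj
  cases j with
  | zero => simpa using h1 0 hj
  | succ j =>
    have h2 := h1 j (by omega)
    have h3 := h1 (j + 1) hj
    rw [Finset.sum_range_succ _ (j + 1), Finset.sum_range_succ _ (j + 1)] at h3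
    omega

theorem xval_congr {n r : ℕ} (R : Finset ℕ) (S : Fin n → Seq r) (σ : Equiv.Perm (Fin n))
    (c c' : ℕ → ℕ) (h : ∀ j, j < n → c j = c' j) : xval R S σ c = xval R S σ c' := by
  funext v
  unfold xval
  congr 1
  refine Finset.sum_congr rfl (fun j hj => h j ?_)
  have := (σ.symm v).2
  simp only [Finset.mem_range] at hj
  omega

theorem xval_sum {n r : ℕ} (R : Finset ℕ) (S : Fin n → Seq r) (σ : Equiv.Perm (Fin n))
    (c : ℕ → ℕ) : ∑ v, xval R S σ c v = Comaj R S σ + ∑ j ∈ Finset.range n, c j * (n - j) := by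
  rw [← Equiv.sum_comp σ]
  unfold xval Comaj
  simp only [Equiv.symm_apply_apply]
  rw [Fin.sum_univ_eq_sum_range (fun p => (DesSet R S σ ∩ Finset.Ico 1 (p + 1)).card +
    ∑ j ∈ Finset.range (p + 1), c j) n, Finset.sum_add_distrib]
  congr 1
  · have h1 : ∀ p, (DesSet R S σ ∩ Finset.Ico 1 (p + 1)).card =
        ∑ i ∈ DesSet R S σ, if i ≤ p then 1 else 0 := by
      intro p
      rw [← Finset.card_filter]
      congr 1
      ext i
      simp only [Finset.mem_inter, Finset.mem_Ico, Finset.mem_filter]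
      constructor
      · rintro ⟨a, b⟩; exact ⟨a, by omega⟩
      · rintro ⟨a, b⟩
        have := DesSet_range a
        exact ⟨a, by omega⟩
    simp only [h1]
    rw [Finset.sum_comm]
    refine Finset.sum_congr rfl (fun i _ => ?_)
    rw [← Finset.card_filter]
    have : (Finset.range n).filter (fun p => i ≤ p) = Finset.Ico i n := by
      ext; simp; omega
    rw [this, Nat.card_Ico]
  · have h1 : ∀ p ∈ Finset.range n, ∑ j ∈ Finset.range (p + 1), c j =
        ∑ j ∈ Finset.range n, if j ≤ p then c j else 0 := by
      intro p hp
      simp only [Finset.mem_range] at hp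
      rw [← Finset.sum_filter]
      refine Finset.sum_congr ?_ (fun _ _ => rfl)
      ext; simp; omega
    rw [Finset.sum_congr rfl h1, Finset.sum_comm]
    refine Finset.sum_congr rfl (fun i _ => ?_)
    rw [← Finset.sum_filter]
    have : (Finset.range n).filter (fun p => i ≤ p) = Finset.Ico i n := by
      ext; simp; omega
    rw [this, Finset.sum_const, Nat.card_Ico, smul_eq_mul, mul_comm]

/-- generalized `Zvec` with arbitrary increments -/
def GZ {n : ℕ} (R : Finset ℕ) (σs : ℕ → Equiv.Perm (Fin n)) (cs : ℕ → ℕ → ℕ) :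
    (i : ℕ) → Fin n → Seq i
  | 0 => fun _ => (0 : Seq 0)
  | (i+1) => fun v => Fin.cons (xval R (GZ R σs cs i) (σs i) (cs i) v) (GZ R σs cs i v)

theorem GZ_reading {n : ℕ} (R : Finset ℕ) (σs : ℕ → Equiv.Perm (Fin n)) (cs : ℕ → ℕ → ℕ)
    (i : ℕ) : IsReading R (GZ R σs cs (i + 1)) (σs i) := xval_reading _ _ _ _

theorem Zvec_reading {n : ℕ} (R : Finset ℕ) (σs : ℕ → Equiv.Perm (Fin n))
    (i : ℕ) : IsReading R (Zvec R σs (i + 1)) (σs i) := by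
  have := xval_reading R (Zvec R σs i) (σs i) (fun _ => 0)
  unfold xval at this
  simp only [Finset.sum_const_zero, add_zero] at this
  exact this

theorem Des_GZ {n : ℕ} (R : Finset ℕ) (σs : ℕ → Equiv.Perm (Fin n)) (cs : ℕ → ℕ → ℕ)
    (i : ℕ) (σ : Equiv.Perm (Fin n)) : DesSet R (GZ R σs cs i) σ = DesSet R (Zvec R σs i) σ := by
  cases i with
  | zero => rfl
  | succ i => exact DesSet_congr (GZ_reading R σs cs i) (Zvec_reading R σs i) σ

theorem GZ_congr {n : ℕ} (R : Finset ℕ) (σs σs' : ℕ → Equiv.Perm (Fin n)) (cs cs' : ℕ → ℕ → ℕ)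
    (k : ℕ) (h : ∀ i, i < k → σs i = σs' i ∧ ∀ j, j < n → cs i j = cs' i j) :
    GZ R σs cs k = GZ R σs' cs' k := by
  induction k with
  | zero => rfl
  | succ k ih =>
    unfold GZ
    obtain ⟨h1, h2⟩ := h k (by omega)
    rw [ih (fun i hi => h i (by omega)), h1, xval_congr _ _ _ _ _ h2]

theorem GZ_inj {n : ℕ} (R : Finset ℕ) (σs σs' : ℕ → Equiv.Perm (Fin n)) (cs cs' : ℕ → ℕ → ℕ)
    (k : ℕ) (h : GZ R σs cs k = GZ R σs' cs' k) :
    ∀ i, i < k → σs i = σs' i ∧ ∀ j, j < n → cs i j = cs' i j := by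
  induction k with
  | zero => intro i hi; omega
  | succ k ih =>
    have h1 : GZ R σs cs k = GZ R σs' cs' k := by
      funext v
      exact (Fin.cons_inj.1 (congrFun h v)).2
    have h2 : σs k = σs' k :=
      reading_unique (GZ_reading R σs cs k) (h ▸ GZ_reading R σs' cs' k)
    have h3 : xval R (GZ R σs cs k) (σs k) (cs k) = xval R (GZ R σs cs k) (σs k) (cs' k) := by
      funext v
      have := (Fin.cons_inj.1 (congrFun h v)).1
      rw [this, h1, h2]
    intro i hi
    rcases Nat.lt_succ_iff_lt_or_eq.1 hi with hi | rfl
    · exact ih h1 i hi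
    · exact ⟨h2, xval_inj _ _ _ _ _ h3⟩

theorem GZ_surj {n : ℕ} (R : Finset ℕ) (k : ℕ) (S : Fin n → Seq k) :
    ∃ σs cs, GZ R σs cs k = S := by
  induction k with
  | zero => exact ⟨fun _ => 1, fun _ _ => 0, Subsingleton.elim _ _⟩
  | succ k ih =>
    obtain ⟨σs, cs, h⟩ := ih (fun v => Fin.tail (S v))
    obtain ⟨σ, hσ⟩ := reading_exists R S
    have hS : S = fun v => (Fin.cons (S v 0) (Fin.tail (S v)) : Seq (k + 1)) := by
      funext v; exact (Fin.cons_self_tail (S v)).symm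
    rw [hS] at hσ
    obtain ⟨c, hc⟩ := xval_surj R (fun v => Fin.tail (S v)) σ (fun v => S v 0) hσ
    refine ⟨Function.update σs k σ, Function.update cs k c, ?_⟩
    have h1 : GZ R (Function.update σs k σ) (Function.update cs k c) k =
        fun v => Fin.tail (S v) := by
      rw [← h]
      apply GZ_congr
      intro i hi
      rw [Function.update_of_ne hi.ne, Function.update_of_ne hi.ne]
      simp
    unfold GZ
    rw [h1, Function.update_self, Function.update_self, hc]
    exact hS.symm

theorem GZ_sum {n : ℕ} (R : Finset ℕ) (σs : ℕ → Equiv.Perm (Fin n)) (cs : ℕ → ℕ → ℕ)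
    (k : ℕ) (i : Fin k) : ∑ v, GZ R σs cs k v (Fin.rev i) =
      Comaj R (Zvec R σs i) (σs i) + ∑ j ∈ Finset.range n, cs i j * (n - j) := by
  induction k with
  | zero => exact i.elim0
  | succ k ih =>
    induction i using Fin.lastCases with
    | last =>
      simp only [Fin.rev_last, GZ, Fin.cons_zero, Fin.val_last]
      rw [xval_sum]
      unfold Comaj
      rw [Des_GZ]
    | cast i =>
      simp only [Fin.rev_castSucc, GZ, Fin.cons_succ, Fin.val_castSucc]
      exact ih i

theorem finite_SYT (μ : YoungDiagram) : Finite (SYT μ) := by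
  let f : SYT μ → (Finset.Icc 1 μ.card → μ.cells) := fun T i =>
    ⟨T.pos i.1, (YoungDiagram.mem_cells _).2 (T.mem i.1 i.2)⟩
  apply Finite.of_injective f
  intro T T' h
  have hp : T.pos = T'.pos := by
    funext i
    by_cases hi : i ∈ Finset.Icc 1 μ.card
    · exact congrArg Subtype.val (congrFun h ⟨i, hi⟩)
    · rw [T.junk i hi, T'.junk i hi]
  cases T; cases T'; cases hp; rfl

/-- extend increments by zero -/
def extC {n k : ℕ} (c : Fin k × Fin n → ℕ) (i j : ℕ) : ℕ :=
  if h : i < k ∧ j < n then c (⟨i, h.1⟩, ⟨j, h.2⟩) else 0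

theorem extC_val {n k : ℕ} (c : Fin k × Fin n → ℕ) (i : Fin k) (j : Fin n) :
    extC c i j = c (i, j) := by
  unfold extC
  rw [dif_pos ⟨i.2, j.2⟩]

theorem expOf_GZ {n K : ℕ} (R : Finset ℕ) (σv : Fin K → Equiv.Perm (Fin n))
    (c : Fin (K + 1) × Fin n → ℕ) :
    expOf (GZ R (extFun σv) (extC c) (K + 1)) = comajExp R (K + 1) σv +
      ∑ p, c p • (Finsupp.single p.1 (n - p.2.val) : Fin (K + 1) →₀ ℕ) := by
  ext i
  unfold expOf comajExp comajI
  simp only [Finsupp.add_apply, Finsupp.finsetSum_apply, Finsupp.smul_apply,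
    Finsupp.equivFunOnFinite_symm_apply_apply, Fintype.sum_prod_type, Finsupp.single_apply]
  rw [GZ_sum, Nat.add_sub_cancel]
  congr 1
  rw [Finset.sum_eq_single i]
  · rw [← Fin.sum_univ_eq_sum_range (fun j => extC c i j * (n - j))]
    simp [extC_val]
  · intro b _ hb
    simp [hb]
  · simp

theorem main_card {n K : ℕ} (μ : YoungDiagram) :
    countSeriesP (α := SYT μ × (Fin n → Seq (K + 1)))
        (fun TS d => IsReading (desSYT TS.1) TS.2 1 ∧ expOf TS.2 = d) =
    countSeriesP (α := (SYT μ × (Fin K → Equiv.Perm (Fin n))) × (Fin (K + 1) × Fin n → ℕ))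
      (fun p d => comajExp (desSYT p.1.1) (K + 1) p.1.2 +
        ∑ q, p.2 q • (Finsupp.single q.1 (n - q.2.val) : Fin (K + 1) →₀ ℕ) = d) := by
  funext d
  unfold countSeriesP
  refine congrArg _ (Eq.symm ?_)
  have hext : ∀ σv : Fin K → Equiv.Perm (Fin n), extFun σv K = 1 := by
    intro σv; simp [extFun]
  refine Nat.card_eq_of_bijective (fun p => ⟨(p.1.1.1, GZ (desSYT p.1.1.1) (extFun p.1.1.2)
    (extC p.1.2) (K + 1)), ?_, ?_⟩) ⟨?_, ?_⟩
  · have := GZ_reading (desSYT p.1.1.1) (extFun p.1.1.2) (extC p.1.2) K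
    rwa [hext] at this
  · exact (expOf_GZ _ _ _).trans p.2
  · rintro ⟨⟨⟨T, σv⟩, c⟩, h⟩ ⟨⟨⟨T', σv'⟩, c'⟩, h'⟩ heq
    simp only [Subtype.mk.injEq, Prod.mk.injEq] at heq
    obtain ⟨rfl, heq⟩ := heq
    have hi := GZ_inj _ _ _ _ _ _ heq
    have h1 : σv = σv' := by
      funext i
      have := (hi i (by omega)).1
      simpa [extFun] using this
    have h2 : c = c' := by
      funext ⟨i, j⟩
      have := (hi i i.2).2 j j.2
      rwa [extC_val, extC_val] at this
    subst h1 h2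
    rfl
  · rintro ⟨⟨T, S⟩, hr, hd⟩
    simp only at hr hd
    obtain ⟨σs, cs, hS⟩ := GZ_surj (desSYT T) (K + 1) S
    have h1 : σs K = 1 := by
      refine reading_unique (GZ_reading (desSYT T) σs cs K) ?_
      rw [hS]; exact hr
    have h2 : GZ (desSYT T) (extFun (fun i : Fin K => σs i))
        (extC (fun q : Fin (K + 1) × Fin n => cs q.1 q.2)) (K + 1) = S := by
      rw [← hS]
      apply GZ_congr
      intro i hi
      refine ⟨?_, fun j hj => by simp [extC, hi, hj]⟩
      unfold extFun
      split_ifs with h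
      · rfl
      · have : i = K := by omega
        rw [this, h1]
    refine ⟨⟨((T, fun i => σs i), fun q => cs q.1 q.2), ?_⟩, ?_⟩
    · beta_reduce
      rw [← expOf_GZ, h2, hd]
    · simp only [Subtype.mk.injEq, Prod.mk.injEq, true_and]
      exact h2

/-- **Theorem (Schur-function principal evaluation, finite case).**
For `λ ⊢ n` and `k ≥ 1`, as power series in `q_1, …, q_k`,
`(∏ᵢ (qᵢ;qᵢ)_n) ⬝ ∑_{T ∈ SYT(λ)} ∑_{S ∈ (ℕ^k)^n, σ_{des T}(S) = ε} q^S
  = ∑_{T ∈ SYT(λ)} ∑_{σ⃗ ∈ S_n^{k−1}} q_1^{comaj¹_T(σ⃗)} ⋯ q_k^{comaj^k_T(σ⃗)}`,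
both sides written coefficientwise as counting series. -/
theorem finite_evaluation (n k : ℕ) (hn : 1 ≤ n) (hk : 1 ≤ k)
    (μ : YoungDiagram) (hμ : μ.card = n) :
    pochAll n k *
      countSeriesP (α := SYT μ × (Fin n → Seq k))
        (fun TS d => IsReading (desSYT TS.1) TS.2 1 ∧ expOf TS.2 = d) =
    countSeriesP (α := SYT μ × (Fin (k-1) → Equiv.Perm (Fin n)))
      (fun Tv d => comajExp (desSYT Tv.1) k Tv.2 = d) := by
  obtain ⟨K, rfl⟩ : ∃ K, k = K + 1 := ⟨k - 1, by omega⟩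
  have := finite_SYT μ
  rw [main_card, pochAll_eq]
  refine many_step' (α := SYT μ × (Fin K → Equiv.Perm (Fin n)))
    (fun p => comajExp (desSYT p.1) (K + 1) p.2) (fun d => inferInstance)
    (fun q : Fin (K + 1) × Fin n => Finsupp.single q.1 (n - q.2.val)) ?_
  rintro ⟨i, j⟩
  have hj := j.2
  simp only [ne_eq, Finsupp.single_eq_zero]
  omega

end

end RomeroComaj
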